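/- Let A be a piecewise-Koszul algebra with period p and jump degree d, let J = ⊕_{i≥1} A_i be the graded Jacobson radical, and let M be a piecewise-Koszul A-module generated in degree s. Then for every n ≥ 1, the (pn−1)-st syzygy Ω^{pn−1}(JM) of JM (in a minimal graded projective resolution) is a piecewise-Koszul module. -/

import Mathlib

noncomputable section

/-- The jump function `δ^d_p(n) = ((n − (n mod p))/p)·d + (n mod p)`. -/
def jump (d p n : ℕ) : ℕ := (n - n % p) / p * d + n % p

/-- A positively graded `F`-algebra `A = ⊕_{i≥0} A_i`. -/
structure GradedAlg (F : Type) [Field F] where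
  A : Type
  [ringA : Ring A]
  [algA : Algebra F A]
  grading : ℕ → Submodule F A
  [graded : GradedAlgebra grading]

attribute [instance] GradedAlg.ringA GradedAlg.algA GradedAlg.graded

namespace GradedAlg

variable {F : Type} [Field F] (𝒜 : GradedAlg F)

/-- The graded Jacobson radical `J = ⊕_{i≥1} A_i`, i.e. the irrelevant ideal. -/
def jideal : Ideal 𝒜.A := (HomogeneousIdeal.irrelevant 𝒜.grading).toIdeal

/-- The standing assumptions: `A_0` is a semisimple Artin algebra, `A` is generated in
degrees 0 and 1 (`A_i · A_j = A_{i+j}`), and `A_1` is finite dimensional over `F`. -/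
structure Standing : Prop where
  semisimple : IsSemisimpleRing ↥(𝒜.grading 0)
  artinian : IsArtinianRing ↥(𝒜.grading 0)
  gen01 : ∀ i j : ℕ, 𝒜.grading i * 𝒜.grading j = 𝒜.grading (i + j)
  findim : FiniteDimensional F ↥(𝒜.grading 1)

/-- A (ℤ-)graded module over the graded algebra `𝒜`. -/
structure GMod where
  M : Type
  [acg : AddCommGroup M]
  [modF : Module F M]
  [modA : Module 𝒜.A M]
  [tower : IsScalarTower F 𝒜.A M]
  [scomm : SMulCommClass 𝒜.A F M]
  grading : ℤ → Submodule F M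
  sup_eq_top : (⨆ j : ℤ, grading j) = ⊤
  indep : iSupIndep grading
  smul_mem : ∀ {i : ℕ} {j : ℤ} {a : 𝒜.A} {m : M},
    a ∈ 𝒜.grading i → m ∈ grading j → a • m ∈ grading ((i : ℤ) + j)

attribute [instance] GMod.acg GMod.modF GMod.modA GMod.tower GMod.scomm

variable {𝒜}

/-- A degree-zero morphism of graded modules. -/
structure GHom (M N : 𝒜.GMod) where
  lin : M.M →ₗ[𝒜.A] N.M
  grad : ∀ (j : ℤ) (x : M.M), x ∈ M.grading j → lin x ∈ N.grading j

/-- A graded module is generated in degree `s` if `A · M_s = M`. -/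
def GMod.GenInDeg (M : 𝒜.GMod) (s : ℤ) : Prop :=
  Submodule.span 𝒜.A (M.grading s : Set M.M) = ⊤

/-- `T` is the trivial graded module `A_0 = A/J`, concentrated in degree `0`. -/
def IsTrivialGMod (T : 𝒜.GMod) : Prop :=
  (∀ j : ℤ, j ≠ 0 → T.grading j = ⊥) ∧
    Nonempty (T.M ≃ₗ[𝒜.A] (𝒜.A ⧸ 𝒜.jideal))

/-- A minimal graded projective resolution
`⋯ → P_{n+1} → P_n → ⋯ → P_0 → M → 0` of the graded module `M`,
with finitely generated terms. -/
structure MinRes (M : 𝒜.GMod) where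
  P : ℕ → 𝒜.GMod
  d : ∀ n : ℕ, GHom (P (n + 1)) (P n)
  aug : GHom (P 0) M
  fg : ∀ n, Module.Finite 𝒜.A (P n).M
  projective : ∀ n, Module.Projective 𝒜.A (P n).M
  aug_surj : Function.Surjective aug.lin
  exact_aug : LinearMap.range (d 0).lin = LinearMap.ker aug.lin
  exact : ∀ n, LinearMap.range (d (n + 1)).lin = LinearMap.ker (d n).lin
  minimal : ∀ n, LinearMap.range (d n).lin ≤ 𝒜.jideal • (⊤ : Submodule 𝒜.A (P n).M)

variable (𝒜)

/-- `M` is a piecewise-Koszul module (period `p`, jump degree `d`, shift `s`):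
it has a minimal graded projective resolution with `P_n` generated in degree `δ^d_p(n) + s`. -/
def IsPKMod (p d : ℕ) (s : ℤ) (M : 𝒜.GMod) : Prop :=
  ∃ R : MinRes M, ∀ n : ℕ, (R.P n).GenInDeg ((jump d p n : ℤ) + s)

/-- `A` is a piecewise-Koszul algebra (period `p`, jump degree `d`): the trivial module `T`
admits a minimal graded projective resolution with `P_n` generated in degree `δ^d_p(n)`. -/
def IsPKAlg (p d : ℕ) (T : 𝒜.GMod) : Prop := IsPKMod 𝒜 p d 0 T

/-- A Koszul module: a minimal graded projective resolution with `P_n` generated in degree `n`. -/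
def IsKoszulMod (M : 𝒜.GMod) : Prop :=
  ∃ R : MinRes M, ∀ n : ℕ, (R.P n).GenInDeg (n : ℤ)

variable {𝒜}

section Ext

variable (T : 𝒜.GMod) {M : 𝒜.GMod}

/-- The space of `A`-linear maps `P_n → T` (cochains). -/
abbrev HomSp (R : MinRes M) (n : ℕ) := (R.P n).M →ₗ[𝒜.A] T.M

/-- Precomposition, as an `F`-linear map on cochains. -/
def precompF {M₁ M₂ : 𝒜.GMod} (g : M₁.M →ₗ[𝒜.A] M₂.M) :
    (M₂.M →ₗ[𝒜.A] T.M) →ₗ[F] (M₁.M →ₗ[𝒜.A] T.M) where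
  toFun f := f ∘ₗ g
  map_add' f₁ f₂ := by ext x; simp
  map_smul' c f := by ext x; simp

/-- Cocycles: maps `P_n → T` vanishing on the image of `P_{n+1}`. -/
def cocyc (R : MinRes M) (n : ℕ) : Submodule F (HomSp T R n) :=
  LinearMap.ker (precompF T (R.d n).lin)

/-- Coboundaries: maps `P_n → T` factoring through `d_{n-1}`. -/
def cobound (R : MinRes M) : (n : ℕ) → Submodule F (HomSp T R n)
  | 0 => ⊥
  | n + 1 => LinearMap.range (precompF T (R.d n).lin)

/-- The coboundaries, viewed inside the cocycles. -/
def extRel (R : MinRes M) (n : ℕ) : Submodule F ↥(cocyc T R n) :=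
  (cobound T R n).comap (cocyc T R n).subtype

/-- `Ext^n_A(M, T)`, computed from the resolution `R` of `M`. -/
abbrev ExtQ (R : MinRes M) (n : ℕ) := ↥(cocyc T R n) ⧸ extRel T R n

/-- The class in `Ext^n_A(M,T)` of a cocycle. -/
def extCls {R : MinRes M} {n : ℕ} {f : HomSp T R n} (hf : f ∈ cocyc T R n) :
    ExtQ T R n :=
  Submodule.Quotient.mk ⟨f, hf⟩

/-- Cochains of shift-degree `j`: maps `P_n → T` vanishing on every `(P_n)_i` with `i ≠ j`. -/
def homDeg (R : MinRes M) (n : ℕ) (j : ℤ) : Submodule F (HomSp T R n) where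
  carrier := {f | ∀ i : ℤ, i ≠ j → ∀ x ∈ (R.P n).grading i, f x = 0}
  add_mem' := fun hf hg i hi x hx => by
    simp only [LinearMap.add_apply, hf i hi x hx, hg i hi x hx, add_zero]
  zero_mem' := fun i hi x hx => rfl
  smul_mem' := fun c f hf i hi x hx => by
    simp only [LinearMap.smul_apply, hf i hi x hx, smul_zero]

/-- The shift-degree `j` component `Ext^n_A(M,T)_j`. -/
def extComp (R : MinRes M) (n : ℕ) (j : ℤ) : Submodule F (ExtQ T R n) :=
  Submodule.map (extRel T R n).mkQ ((homDeg T R n j).comap (cocyc T R n).subtype)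

/-- Transport `Ext` along an equality of cohomological degrees. -/
def extCast (R : MinRes M) {a b : ℕ} (h : a = b) : ExtQ T R a ≃ₗ[F] ExtQ T R b :=
  h ▸ LinearEquiv.refl F (ExtQ T R a)

/-- A chain map lifting of a cochain `g : P_j → T` over the resolutions `RM` of `M`
and `RT` of `T`. -/
structure ChainLift (RT : MinRes T) (RM : MinRes M) (j : ℕ)
    (g : (RM.P j).M →ₗ[𝒜.A] T.M) where
  ℓ : ∀ m k : ℕ, m = k + j → ((RM.P m).M →ₗ[𝒜.A] (RT.P k).M)
  comm_aug : RT.aug.lin ∘ₗ ℓ j 0 (by omega) = g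
  comm : ∀ k : ℕ, (RT.d k).lin ∘ₗ ℓ (k + j + 1) (k + 1) (by omega) =
    ℓ (k + j) k rfl ∘ₗ (RM.d (k + j)).lin

/-- `μ` is the (bigraded family of) Yoneda product(s)
`Ext^i(T,T) ⊗ Ext^j(M,T) → Ext^{i+j}(M,T)`: it is computed by composing a cocycle
`f : P_i → T` with a chain lifting of a cocycle `g : Q_j → T`. -/
def IsYonedaMul (RT : MinRes T) (RM : MinRes M)
    (μ : ∀ i j : ℕ, ExtQ T RT i →ₗ[F] ExtQ T RM j →ₗ[F] ExtQ T RM (i + j)) : Prop :=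
  ∀ (i j : ℕ) (f : HomSp T RT i) (hf : f ∈ cocyc T RT i)
    (g : HomSp T RM j) (hg : g ∈ cocyc T RM j)
    (L : ChainLift T RT RM j g)
    (hc : f ∘ₗ L.ℓ (i + j) i (by omega) ∈ cocyc T RM (i + j)),
    μ i j (extCls T hf) (extCls T hg) = extCls T hc

/-- `E(A) = Ext^*_A(A_0,A_0)` is generated in the ext-degrees belonging to `S`. -/
def ExtGenIn (RT : MinRes T)
    (μ : ∀ i j : ℕ, ExtQ T RT i →ₗ[F] ExtQ T RT j →ₗ[F] ExtQ T RT (i + j))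
    (S : Set ℕ) : Prop :=
  ∀ W : (n : ℕ) → Submodule F (ExtQ T RT n),
    (∀ n ∈ S, W n = ⊤) →
    (∀ (i j : ℕ) (x : ExtQ T RT i) (y : ExtQ T RT j),
      x ∈ W i → y ∈ W j → μ i j x y ∈ W (i + j)) →
    ∀ n, W n = ⊤

/-- `E(M) = Ext^*_A(M,A_0)` is generated in degree `0` as a graded `E(A)`-module. -/
def ExtModGenInZero (RT : MinRes T) (RM : MinRes M)
    (μ : ∀ i j : ℕ, ExtQ T RT i →ₗ[F] ExtQ T RM j →ₗ[F] ExtQ T RM (i + j)) : Prop :=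
  ∀ W : (n : ℕ) → Submodule F (ExtQ T RM n),
    W 0 = ⊤ →
    (∀ (i j : ℕ) (x : ExtQ T RT i) (y : ExtQ T RM j),
      y ∈ W j → μ i j x y ∈ W (i + j)) →
    ∀ n, W n = ⊤

end Ext

/-- `JM` is (a graded module isomorphic to) the submodule `J·M` of `M`. -/
def IsJM (M JM : 𝒜.GMod) : Prop :=
  ∃ e : JM.M ≃ₗ[𝒜.A] ↥(𝒜.jideal • (⊤ : Submodule 𝒜.A M.M)),
    ∀ (j : ℤ) (x : JM.M), x ∈ JM.grading j ↔ ((e x : M.M) ∈ M.grading j)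

/-- `Q` is (a graded module isomorphic to) the quotient `M/JM`. -/
def IsQuotJM (M Q : 𝒜.GMod) : Prop :=
  ∃ e : Q.M ≃ₗ[𝒜.A] (M.M ⧸ (𝒜.jideal • (⊤ : Submodule 𝒜.A M.M))),
    ∀ j : ℤ, Q.grading j = Submodule.map
      ((e.symm.toLinearMap ∘ₗ (𝒜.jideal • (⊤ : Submodule 𝒜.A M.M)).mkQ).restrictScalars F)
      (M.grading j)

/-- `W` is (isomorphic to) the `n`-th syzygy `Ω^n(M)` of `M` in the minimal graded
projective resolution `R`. -/
def IsSyzygy {M : 𝒜.GMod} (R : MinRes M) : ℕ → 𝒜.GMod → Prop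
  | 0, W => ∃ e : W.M ≃ₗ[𝒜.A] M.M,
      ∀ (j : ℤ) (x : W.M), x ∈ W.grading j ↔ e x ∈ M.grading j
  | 1, W => ∃ e : W.M ≃ₗ[𝒜.A] ↥(LinearMap.ker R.aug.lin),
      ∀ (j : ℤ) (x : W.M), x ∈ W.grading j ↔ ((e x : (R.P 0).M) ∈ (R.P 0).grading j)
  | (n + 2), W => ∃ e : W.M ≃ₗ[𝒜.A] ↥(LinearMap.ker (R.d n).lin),
      ∀ (j : ℤ) (x : W.M), x ∈ W.grading j ↔ ((e x : (R.P (n + 1)).M) ∈ (R.P (n + 1)).grading j)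

end GradedAlg


namespace GradedAlg

section Aux

variable {F : Type} [Field F] {𝒜 : GradedAlg F}

/-- Induction on homogeneous elements of a graded module. -/
theorem GMod.hom_ind (N : 𝒜.GMod) {q : N.M → Prop} (h0 : q 0)
    (hadd : ∀ x y, q x → q y → q (x + y))
    (hh : ∀ j x, x ∈ N.grading j → q x) (x : N.M) : q x := by
  have hx : x ∈ ⨆ j : ℤ, N.grading j := by rw [N.sup_eq_top]; trivial
  exact Submodule.iSup_induction N.grading (motive := q) hx hh h0 hadd

/-- Induction on homogeneous elements of a graded algebra. -/
theorem alg_ind {q : 𝒜.A → Prop} (h0 : q 0)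
    (hadd : ∀ x y, q x → q y → q (x + y))
    (hh : ∀ j x, x ∈ 𝒜.grading j → q x) (x : 𝒜.A) : q x :=
  DirectSum.Decomposition.inductionOn 𝒜.grading h0 (fun {i} m => hh i m m.2) hadd x

theorem GMod.exists_glue (N : 𝒜.GMod) {X : Type} [AddCommGroup X] [Module F X]
    (φ : ℤ → N.M →ₗ[F] X) :
    ∃ g : N.M →ₗ[F] X, ∀ j x, x ∈ N.grading j → g x = φ j x := by
  classical
  let _ : DirectSum.Decomposition N.grading :=
    DirectSum.IsInternal.chooseDecomposition _
      (DirectSum.isInternal_submodule_of_iSupIndep_of_iSup_eq_top N.indep N.sup_eq_top)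
  refine ⟨(DirectSum.toModule F ℤ X (fun j => φ j ∘ₗ (N.grading j).subtype)) ∘ₗ
    (DirectSum.decomposeLinearEquiv N.grading).toLinearMap, fun j x hx => ?_⟩
  have : DirectSum.decompose N.grading x = DirectSum.lof F ℤ (fun j => N.grading j) j ⟨x, hx⟩ :=
    DirectSum.decompose_of_mem _ hx
  rw [LinearMap.comp_apply]
  change DirectSum.toModule F ℤ X _ (DirectSum.decompose N.grading x) = _
  rw [this, DirectSum.toModule_lof]
  rfl

theorem GMod.exists_proj (N : 𝒜.GMod) (k : ℤ) :
    ∃ g : N.M →ₗ[F] N.M, (∀ x, x ∈ N.grading k → g x = x) ∧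
      ∀ j x, x ∈ N.grading j → j ≠ k → g x = 0 := by
  obtain ⟨g, hg⟩ := N.exists_glue (fun j => if j = k then LinearMap.id else 0)
  refine ⟨g, fun x hx => ?_, fun j x hx h => ?_⟩
  · simp [hg k x hx]
  · simp [hg j x hx, h]

/-- Projection onto the component of degree `k`. -/
def GMod.proj (N : 𝒜.GMod) (k : ℤ) : N.M →ₗ[F] N.M := (N.exists_proj k).choose

theorem GMod.proj_same (N : 𝒜.GMod) {k : ℤ} {x : N.M} (hx : x ∈ N.grading k) :
    N.proj k x = x := (N.exists_proj k).choose_spec.1 x hx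

theorem GMod.proj_ne (N : 𝒜.GMod) {j k : ℤ} {x : N.M} (hx : x ∈ N.grading j) (h : j ≠ k) :
    N.proj k x = 0 := (N.exists_proj k).choose_spec.2 j x hx h

theorem GMod.proj_mem (N : 𝒜.GMod) (k : ℤ) (x : N.M) : N.proj k x ∈ N.grading k := by
  induction x using N.hom_ind with
  | h0 => simp
  | hadd x y hx hy => rw [map_add]; exact add_mem hx hy
  | hh j x hx =>
    by_cases h : j = k
    · subst h; rwa [N.proj_same hx]
    · rw [N.proj_ne hx h]; exact zero_mem _

theorem GMod.proj_smul (N : 𝒜.GMod) {i : ℕ} {a : 𝒜.A} (ha : a ∈ 𝒜.grading i) (k : ℤ) (x : N.M) :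
    N.proj k (a • x) = a • N.proj (k - i) x := by
  induction x using N.hom_ind with
  | h0 => simp
  | hadd x y hx hy => rw [smul_add, map_add, map_add, hx, hy, smul_add]
  | hh j x hx =>
    have := N.smul_mem ha hx
    by_cases h : j = k - i
    · subst h
      rw [N.proj_same hx, N.proj_same]; convert this using 1; congr 1; ring
    · rw [N.proj_ne hx h, N.proj_ne this, smul_zero]; omega

/-- An element all of whose components lie in an additive subgroup lies in it. -/
theorem GMod.mem_of_proj (N : 𝒜.GMod) (L : AddSubgroup N.M) (x : N.M)
    (h : ∀ k, N.proj k x ∈ L) : x ∈ L := by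
  have key : ∃ s : Finset ℤ, x = ∑ k ∈ s, N.proj k x := by
    have : ∃ s : Finset ℤ, ∀ t, s ⊆ t → x = ∑ k ∈ t, N.proj k x := by
      clear h
      induction x using N.hom_ind with
      | h0 => exact ⟨∅, by simp⟩
      | hadd x y hx hy =>
        obtain ⟨s, hs⟩ := hx
        obtain ⟨s', hs'⟩ := hy
        refine ⟨s ∪ s', fun t ht => ?_⟩
        simp only [map_add, Finset.sum_add_distrib]
        rw [← hs t (Finset.union_subset_left ht), ← hs' t (Finset.union_subset_right ht)]
      | hh j x hx =>
        refine ⟨{j}, fun t ht => ?_⟩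
        rw [Finset.sum_eq_single_of_mem j (by simpa using ht)]
        · rw [N.proj_same hx]
        · intro b _ hb; exact N.proj_ne hx hb.symm
    obtain ⟨s, hs⟩ := this
    exact ⟨s, hs s subset_rfl⟩
  obtain ⟨s, hs⟩ := key
  rw [hs]
  exact sum_mem fun k _ => h k

theorem mem_jideal_of_mem {i : ℕ} {a : 𝒜.A} (ha : a ∈ 𝒜.grading i) (hi : i ≠ 0) :
    a ∈ 𝒜.jideal :=
  HomogeneousIdeal.mem_irrelevant_of_mem 𝒜.grading (Nat.pos_of_ne_zero hi) ha

/-- The submodule `J N`. -/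
abbrev GMod.rad (N : 𝒜.GMod) : Submodule 𝒜.A N.M := 𝒜.jideal • (⊤ : Submodule 𝒜.A N.M)

/-- Components of elements of `J N` come from lower degree components. -/
theorem GMod.proj_mem_of_mem_rad (N : 𝒜.GMod) {x : N.M} (hx : x ∈ N.rad) (k : ℤ)
    (L : Submodule 𝒜.A N.M) (hL : ∀ j, j < k → ∀ y ∈ N.grading j, y ∈ L) :
    N.proj k x ∈ L := by
  refine Submodule.smul_induction_on (p := fun x => N.proj k x ∈ L) hx ?_ ?_
  · intro a ha m _
    have ha' : a ∈ (⨆ i > 0, AddSubmonoid.ofClass (𝒜.grading i) : AddSubmonoid 𝒜.A) := by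
      rw [← HomogeneousIdeal.irrelevant_eq_iSup]; exact ha
    clear ha
    induction ha' using AddSubmonoid.iSup_induction' with
    | zero => simp
    | add x y _ _ hx hy => rw [add_smul, map_add]; exact add_mem hx hy
    | mem i a ha =>
      rw [AddSubmonoid.mem_iSup_prop] at ha
      rcases ha with rfl | ⟨hi, ha⟩
      · simp
      · rw [N.proj_smul ha]
        exact L.smul_mem _ (hL _ (by omega) _ (N.proj_mem _ _))
  · intro x y hx hy
    rw [map_add]; exact add_mem hx hy

theorem GMod.GenInDeg.proj_mem_rad {N : 𝒜.GMod} {t : ℤ} (h : N.GenInDeg t) {k : ℤ} (hk : k ≠ t)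
    (x : N.M) : N.proj k x ∈ N.rad := by
  have hx : x ∈ Submodule.span 𝒜.A (N.grading t : Set N.M) := by rw [h]; trivial
  revert k
  induction hx using Submodule.span_induction with
  | mem x hx => intro k hk; rw [N.proj_ne hx hk.symm]; exact zero_mem _
  | zero => intro k hk; simp
  | add x y _ _ hx hy => intro k hk; rw [map_add]; exact add_mem (hx hk) (hy hk)
  | smul a x _ hx =>
    intro k hk
    induction a using alg_ind with
    | h0 => simp
    | hadd a b ha hb => rw [add_smul, map_add]; exact add_mem ha hb
    | hh i a ha =>
      rw [N.proj_smul ha]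
      by_cases hi : i = 0
      · subst hi
        exact Submodule.smul_mem _ _ (hx (by simpa using hk))
      · exact Submodule.smul_mem_smul (mem_jideal_of_mem ha hi) trivial

theorem GMod.GenInDeg.mem_rad {N : 𝒜.GMod} {t : ℤ} (h : N.GenInDeg t) {k : ℤ} (hk : k ≠ t)
    {x : N.M} (hx : x ∈ N.grading k) : x ∈ N.rad := by
  rw [← N.proj_same hx]; exact h.proj_mem_rad hk x

theorem GMod.GenInDeg.proj_eq_zero {N : 𝒜.GMod} {t : ℤ} (h : N.GenInDeg t) {k : ℤ} (hk : k < t)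
    (x : N.M) : N.proj k x = 0 := by
  have hx : x ∈ Submodule.span 𝒜.A (N.grading t : Set N.M) := by rw [h]; trivial
  revert k
  induction hx using Submodule.span_induction with
  | mem x hx => intro k hk; rw [N.proj_ne hx hk.ne']
  | zero => intro k hk; simp
  | add x y _ _ hx hy => intro k hk; rw [map_add, hx hk, hy hk, add_zero]
  | smul a x _ hx =>
    intro k hk
    induction a using alg_ind with
    | h0 => simp
    | hadd a b ha hb => rw [add_smul, map_add, ha, hb, add_zero]
    | hh i a ha => rw [N.proj_smul ha, hx (by omega), smul_zero]

/-- In a module generated in degree `t`, elements of `J N` of degree at most `t` vanish. -/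
theorem GMod.GenInDeg.eq_zero_of_mem_rad {N : 𝒜.GMod} {t : ℤ} (h : N.GenInDeg t) {k : ℤ}
    (hk : k ≤ t) {x : N.M} (hx : x ∈ N.grading k) (hr : x ∈ N.rad) : x = 0 := by
  have := N.proj_mem_of_mem_rad hr k ⊥ (fun j hj y hy => by
    rw [← N.proj_same hy, h.proj_eq_zero (by omega)]; simp)
  rwa [N.proj_same hx, Submodule.mem_bot] at this

/-- A finitely generated graded module is bounded below. -/
theorem GMod.bdd_below (N : 𝒜.GMod) (hN : Module.Finite 𝒜.A N.M) :
    ∃ b : ℤ, ∀ k < b, ∀ x : N.M, N.proj k x = 0 := by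
  obtain ⟨S, hS⟩ := hN.fg_top
  have h1 : ∀ x : N.M, ∃ b : ℤ, ∀ k < b, N.proj k x = 0 := by
    intro x
    induction x using N.hom_ind with
    | h0 => exact ⟨0, by simp⟩
    | hadd x y hx hy =>
      obtain ⟨b, hb⟩ := hx
      obtain ⟨c, hc⟩ := hy
      exact ⟨min b c, fun k hk => by rw [map_add, hb k (by omega), hc k (by omega), add_zero]⟩
    | hh j x hx => exact ⟨j, fun k hk => N.proj_ne hx hk.ne'⟩
  choose β hβ using h1
  obtain ⟨b, hb⟩ : ∃ b : ℤ, ∀ x ∈ S, b ≤ β x := by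
    obtain ⟨b, hb⟩ := (S.image β).bddBelow
    exact ⟨b, fun x hx => hb (by simpa using ⟨x, hx, rfl⟩)⟩
  refine ⟨b, fun k hk x => ?_⟩
  have hx : x ∈ Submodule.span 𝒜.A (S : Set N.M) := by rw [hS]; trivial
  revert k
  induction hx using Submodule.span_induction with
  | mem x hx => intro k hk; exact hβ x k (lt_of_lt_of_le hk (hb x hx))
  | zero => intro k hk; simp
  | add x y _ _ hx hy => intro k hk; rw [map_add, hx k hk, hy k hk, add_zero]
  | smul a x _ hx =>
    intro k hk
    induction a using alg_ind with
    | h0 => simp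
    | hadd a b ha hb => rw [add_smul, map_add, ha, hb, add_zero]
    | hh i a ha => rw [N.proj_smul ha, hx _ (by omega), smul_zero]

/-- Graded Nakayama. -/
theorem GMod.genInDeg_of_mem_rad (N : 𝒜.GMod) (hN : Module.Finite 𝒜.A N.M) (t : ℤ)
    (h : ∀ k, k ≠ t → ∀ x ∈ N.grading k, x ∈ N.rad) : N.GenInDeg t := by
  obtain ⟨b, hb⟩ := N.bdd_below hN
  have key : ∀ m : ℕ, ∀ k : ℤ, k < b + m → ∀ x ∈ N.grading k,
      x ∈ Submodule.span 𝒜.A (N.grading t : Set N.M) := by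
    intro m
    induction m with
    | zero =>
      intro k hk x hx
      rw [← N.proj_same hx, hb k (by simpa using hk)]; exact zero_mem _
    | succ m ih =>
      intro k hk x hx
      by_cases hkt : k = t
      · subst hkt; exact Submodule.subset_span hx
      · have := N.proj_mem_of_mem_rad (h k hkt x hx) k
          (Submodule.span 𝒜.A (N.grading t : Set N.M))
          (fun j hj y hy => ih j (by push_cast at hk; omega) y hy)
        rwa [N.proj_same hx] at this
  rw [GMod.GenInDeg, eq_top_iff]
  intro x _
  induction x using N.hom_ind with
  | h0 => exact zero_mem _
  | hadd x y hx hy => exact add_mem (hx trivial) (hy trivial)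
  | hh j x hx => exact key (j - b + 1).toNat j (by omega) x hx

/-- Lifting through a projective, respecting degrees (up to a shift by `c`) if `b` holds. -/
theorem exists_lift (b : Prop) (c : ℤ) (P X Y : 𝒜.GMod) (hP : Module.Projective 𝒜.A P.M)
    (π : GHom X Y) (f : P.M →ₗ[𝒜.A] Y.M)
    (hf : b → ∀ j x, x ∈ P.grading j → f x ∈ Y.grading (j + c))
    (hr : ∀ x, f x ∈ LinearMap.range π.lin) :
    ∃ g : P.M →ₗ[𝒜.A] X.M, (b → ∀ j x, x ∈ P.grading j → g x ∈ X.grading (j + c)) ∧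
      ∀ x, π.lin (g x) = f x := by
  obtain ⟨g0, hg0⟩ := Module.projective_lifting_property π.lin.rangeRestrict
    (f.codRestrict _ hr) π.lin.surjective_rangeRestrict
  have hg0' : ∀ x, π.lin (g0 x) = f x := fun x => by
    have := LinearMap.congr_fun hg0 x
    exact congrArg Subtype.val this
  by_cases hb : b
  swap
  · exact ⟨g0, fun h => absurd h hb, hg0'⟩
  replace hf := hf hb
  obtain ⟨g, hg⟩ := P.exists_glue (fun j => X.proj (j + c) ∘ₗ g0.restrictScalars F)
  have hπ : ∀ k y, π.lin (X.proj k y) = Y.proj k (π.lin y) := by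
    intro k y
    induction y using X.hom_ind with
    | h0 => simp
    | hadd x y hx hy => simp [hx, hy]
    | hh j x hx =>
      by_cases h : j = k
      · subst h; rw [X.proj_same hx, Y.proj_same (π.grad _ _ hx)]
      · rw [X.proj_ne hx h, Y.proj_ne (π.grad _ _ hx) h, map_zero]
  refine ⟨{ toFun := g, map_add' := map_add g, map_smul' := ?_ }, fun _ j x hx => ?_, fun x => ?_⟩
  · intro a x
    simp only [RingHom.id_apply]
    induction x using P.hom_ind with
    | h0 => simp
    | hadd x y hx hy => rw [smul_add, map_add, map_add, hx, hy, smul_add]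
    | hh j x hx =>
      induction a using alg_ind with
      | h0 => simp
      | hadd a b ha hb => rw [add_smul, map_add, ha, hb, add_smul]
      | hh i a ha =>
        rw [hg _ _ hx, hg _ _ (P.smul_mem ha hx)]
        simp only [LinearMap.comp_apply, LinearMap.restrictScalars_apply, map_smul]
        rw [X.proj_smul ha]
        congr 3; ring
  · simp only [LinearMap.coe_mk, AddHom.coe_mk]
    rw [hg _ _ hx]; exact X.proj_mem _ _
  · simp only [LinearMap.coe_mk, AddHom.coe_mk]
    induction x using P.hom_ind with
    | h0 => simp
    | hadd x y hx hy => simp [hx, hy]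
    | hh j x hx =>
      rw [hg _ _ hx]
      simp only [LinearMap.comp_apply, LinearMap.restrictScalars_apply]
      rw [hπ, hg0', Y.proj_same (hf _ _ hx)]

/-- An exact (in positive degrees) complex of graded projective modules. -/
structure Cpx (𝒜 : GradedAlg F) where
  P : ℕ → 𝒜.GMod
  d : ∀ n : ℕ, GHom (P (n + 1)) (P n)
  projective : ∀ n, Module.Projective 𝒜.A (P n).M
  exact : ∀ n, LinearMap.range (d (n + 1)).lin = LinearMap.ker (d n).lin

/-- The underlying complex of a minimal resolution. -/
def MinRes.toCpx {M : 𝒜.GMod} (R : MinRes M) : Cpx 𝒜 := ⟨R.P, R.d, R.projective, R.exact⟩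

theorem Cpx.d_d (C : Cpx 𝒜) (n : ℕ) (x : (C.P (n + 2)).M) :
    (C.d n).lin ((C.d (n + 1)).lin x) = 0 := by
  have : (C.d (n + 1)).lin x ∈ LinearMap.range (C.d (n + 1)).lin := ⟨x, rfl⟩
  rw [C.exact] at this
  exact this

/-- Comparison theorem: a map in degree zero extends to a chain map. -/
theorem chain_lift (b : Prop) (c : ℤ) (C D : Cpx 𝒜) (g0 : (C.P 0).M →ₗ[𝒜.A] (D.P 0).M)
    (hg0 : b → ∀ j x, x ∈ (C.P 0).grading j → g0 x ∈ (D.P 0).grading (j + c))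
    (hr : ∀ x, g0 ((C.d 0).lin x) ∈ LinearMap.range (D.d 0).lin) :
    ∃ g : ∀ n, (C.P n).M →ₗ[𝒜.A] (D.P n).M, g 0 = g0 ∧
      (b → ∀ n j x, x ∈ (C.P n).grading j → g n x ∈ (D.P n).grading (j + c)) ∧
      ∀ n x, (D.d n).lin (g (n + 1) x) = g n ((C.d n).lin x) := by
  let S : ℕ → Type := fun n => {g : (C.P n).M →ₗ[𝒜.A] (D.P n).M //
    (b → ∀ j x, x ∈ (C.P n).grading j → g x ∈ (D.P n).grading (j + c)) ∧
    ∀ x, g ((C.d n).lin x) ∈ LinearMap.range (D.d n).lin}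
  have step : ∀ n (g : S n), ∃ k : S (n + 1), ∀ x, (D.d n).lin (k.1 x) = g.1 ((C.d n).lin x) := by
    intro n g
    obtain ⟨k, hk, hk'⟩ := exists_lift b c (C.P (n + 1)) (D.P (n + 1)) (D.P n) (C.projective _)
      (D.d n) (g.1 ∘ₗ (C.d n).lin) (fun hb j x hx => g.2.1 hb _ _ ((C.d n).grad _ _ hx)) g.2.2
    refine ⟨⟨k, hk, fun x => ?_⟩, hk'⟩
    rw [D.exact, LinearMap.mem_ker, hk', LinearMap.comp_apply, C.d_d, map_zero]
  choose st hst using step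
  let G : ∀ n, S n := fun n => Nat.rec (motive := S) ⟨g0, hg0, hr⟩ st n
  exact ⟨fun n => (G n).1, rfl, fun hb n => (G n).2.1 hb, fun n x => hst n (G n) x⟩

/-- A chain map which is zero on the homology in degree zero is null-homotopic. -/
theorem exists_homotopy (C : Cpx 𝒜) (φ : ∀ n, (C.P n).M →ₗ[𝒜.A] (C.P n).M)
    (hφ : ∀ n x, (C.d n).lin (φ (n + 1) x) = φ n ((C.d n).lin x))
    (h0 : ∀ x, φ 0 x ∈ LinearMap.range (C.d 0).lin) (n : ℕ) :
    ∃ (σ : (C.P n).M →ₗ[𝒜.A] (C.P (n + 1)).M),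
      ∀ x, φ (n + 1) x - σ ((C.d n).lin x) ∈ LinearMap.range (C.d (n + 1)).lin := by
  have key : ∀ n, ∃ (σ : (C.P n).M →ₗ[𝒜.A] (C.P (n + 1)).M),
      ∀ x, (C.d n).lin (σ ((C.d n).lin x)) = φ n ((C.d n).lin x) := by
    intro n
    induction n with
    | zero =>
      obtain ⟨σ, -, hσ⟩ := exists_lift False 0 (C.P 0) (C.P 1) (C.P 0) (C.projective _)
        (C.d 0) (φ 0) (fun h => h.elim) h0
      exact ⟨σ, fun x => hσ _⟩
    | succ n ih =>
      obtain ⟨σ, hσ⟩ := ih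
      obtain ⟨τ, -, hτ⟩ := exists_lift False 0 (C.P (n + 1)) (C.P (n + 2)) (C.P (n + 1))
        (C.projective _) (C.d (n + 1)) (φ (n + 1) - σ ∘ₗ (C.d n).lin) (fun h => h.elim)
        (fun x => by
          rw [C.exact, LinearMap.mem_ker, LinearMap.sub_apply, map_sub, LinearMap.comp_apply, hσ,
            hφ, sub_self])
      refine ⟨τ, fun x => ?_⟩
      rw [hτ, LinearMap.sub_apply, LinearMap.comp_apply, C.d_d, map_zero, sub_zero]
  obtain ⟨σ, hσ⟩ := key n
  refine ⟨σ, fun x => ?_⟩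
  rw [C.exact, LinearMap.mem_ker, map_sub, hσ, hφ, sub_self]

theorem map_mem_rad {N K : 𝒜.GMod} (f : N.M →ₗ[𝒜.A] K.M) {x : N.M} (hx : x ∈ N.rad) :
    f x ∈ K.rad := by
  have : f x ∈ Submodule.map f N.rad := ⟨x, hx, rfl⟩
  rw [GMod.rad, Submodule.map_smul''] at this
  exact Submodule.smul_mono le_rfl le_top this

/-- The product of two graded modules. -/
def GMod.prod (N K : 𝒜.GMod) : 𝒜.GMod where
  M := N.M × K.M
  grading j := (N.grading j).prod (K.grading j)
  sup_eq_top := by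
    rw [eq_top_iff]
    rintro ⟨x, y⟩ -
    have h1 : (x, (0 : K.M)) ∈ ⨆ j, (N.grading j).prod (K.grading j) := by
      induction x using N.hom_ind with
      | h0 => exact zero_mem _
      | hadd _ _ hx hy =>
        have := add_mem hx hy
        rwa [Prod.mk_add_mk, add_zero] at this
      | hh j x hx =>
        exact Submodule.mem_iSup_of_mem j ⟨hx, zero_mem _⟩
    have h2 : ((0 : N.M), y) ∈ ⨆ j, (N.grading j).prod (K.grading j) := by
      induction y using K.hom_ind with
      | h0 => exact zero_mem _
      | hadd _ _ hx hy =>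
        have := add_mem hx hy
        rwa [Prod.mk_add_mk, add_zero] at this
      | hh j x hx =>
        exact Submodule.mem_iSup_of_mem j ⟨zero_mem _, hx⟩
    have := add_mem h1 h2
    rwa [Prod.mk_add_mk, add_zero, zero_add] at this
  indep := by
    intro i
    rw [Submodule.disjoint_def]
    intro x hx hx'
    have hle : (⨆ j, ⨆ (_ : j ≠ i), (N.grading j).prod (K.grading j)) ≤
        (⨆ j, ⨆ (_ : j ≠ i), N.grading j).prod (⨆ j, ⨆ (_ : j ≠ i), K.grading j) :=
      iSup₂_le fun j hj => Submodule.prod_mono (le_iSup₂_of_le j hj le_rfl)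
        (le_iSup₂_of_le j hj le_rfl)
    have hx'' := hle hx'
    have e1 := (Submodule.disjoint_def.1 (N.indep i)) _ hx.1 hx''.1
    have e2 := (Submodule.disjoint_def.1 (K.indep i)) _ hx.2 hx''.2
    exact Prod.ext e1 e2
  smul_mem := fun ha hm => ⟨N.smul_mem ha hm.1, K.smul_mem ha hm.2⟩

/-- Terms of the mapping cone. -/
def coneP (P K : Cpx 𝒜) : ℕ → 𝒜.GMod
  | 0 => P.P 0
  | n + 1 => (P.P (n + 1)).prod (K.P n)

section Cone

variable (P K : Cpx 𝒜) (f : ∀ n, (K.P n).M →ₗ[𝒜.A] (P.P n).M)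
  (hfg : ∀ n j x, x ∈ (K.P n).grading j → f n x ∈ (P.P n).grading j)

/-- Differentials of the mapping cone. -/
def coneD : ∀ n : ℕ, GHom (coneP P K (n + 1)) (coneP P K n)
  | 0 =>
    { lin := ((P.d 0).lin.coprod (f 0) : (P.P 1).M × (K.P 0).M →ₗ[𝒜.A] (P.P 0).M)
      grad := fun j x hx => add_mem ((P.d 0).grad j _ hx.1) (hfg 0 j _ hx.2) }
  | n + 1 =>
    { lin := (((P.d (n + 1)).lin.coprod (f (n + 1))).prod
        ((0 : (P.P (n + 2)).M →ₗ[𝒜.A] (K.P n).M).coprod (-(K.d n).lin)) :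
        (P.P (n + 2)).M × (K.P (n + 1)).M →ₗ[𝒜.A] (P.P (n + 1)).M × (K.P n).M)
      grad := fun j x hx => ⟨add_mem ((P.d (n + 1)).grad j _ hx.1) (hfg (n + 1) j _ hx.2),
        add_mem (zero_mem _) (neg_mem ((K.d n).grad j _ hx.2))⟩ }

theorem coneD_zero (x : (P.P 1).M) (y : (K.P 0).M) :
    (coneD P K f hfg 0).lin (x, y) = (P.d 0).lin x + f 0 y := rfl

theorem coneD_succ (n : ℕ) (x : (P.P (n + 2)).M) (y : (K.P (n + 1)).M) :
    (coneD P K f hfg (n + 1)).lin (x, y) =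
      ((P.d (n + 1)).lin x + f (n + 1) y, -(K.d n).lin y) := by
  change ((P.d (n + 1)).lin x + f (n + 1) y, (0 : (K.P n).M) + -(K.d n).lin y) = _
  rw [zero_add]

/-- The mapping cone. -/
def cone (hf : ∀ n x, (P.d n).lin (f (n + 1) x) = f n ((K.d n).lin x))
    (hinj : ∀ y, f 0 y ∈ LinearMap.range (P.d 0).lin → y ∈ LinearMap.range (K.d 0).lin) :
    Cpx 𝒜 where
  P := coneP P K
  d := coneD P K f hfg
  projective n := by
    cases n with
    | zero => exact P.projective 0
    | succ n =>
      have := P.projective (n + 1)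
      have := K.projective n
      exact inferInstanceAs (Module.Projective 𝒜.A ((P.P (n + 1)).M × (K.P n).M))
  exact n := by
    cases n with
    | zero =>
      apply le_antisymm
      · rintro _ ⟨⟨x, y⟩, rfl⟩
        rw [LinearMap.mem_ker, coneD_succ]
        erw [coneD_zero]
        rw [map_add, P.d_d, hf, map_neg]; abel
      · rintro ⟨x, y⟩ hxy
        replace hxy : (P.d 0).lin x + f 0 y = 0 := hxy
        obtain ⟨y', hy'⟩ := hinj y ⟨-x, by rw [map_neg]; exact neg_eq_of_add_eq_zero_right hxy⟩
        have : x + f 1 y' ∈ LinearMap.ker (P.d 0).lin := by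
          rw [LinearMap.mem_ker, map_add, hf, hy']; exact hxy
        rw [← P.exact] at this
        obtain ⟨x', hx'⟩ := this
        refine ⟨((x', -y') : (P.P 2).M × (K.P 1).M), ?_⟩
        erw [coneD_succ]
        rw [map_neg, map_neg, neg_neg, hy', hx', add_neg_cancel_right]
    | succ n =>
      apply le_antisymm
      · rintro _ ⟨⟨x, y⟩, rfl⟩
        rw [LinearMap.mem_ker, coneD_succ]
        erw [coneD_succ]
        rw [map_add, P.d_d, hf, map_neg, map_neg, K.d_d, neg_zero, neg_zero, zero_add,
          add_neg_cancel]
        rfl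
      · rintro ⟨x, y⟩ hxy
        replace hxy : ((P.d (n + 1)).lin x + f (n + 1) y, -(K.d n).lin y) =
            (0 : (P.P (n + 1)).M × (K.P n).M) :=
          (coneD_succ P K f hfg n x y).symm.trans hxy
        have h1 : (P.d (n + 1)).lin x + f (n + 1) y = 0 := congrArg Prod.fst hxy
        have h2 : -(K.d n).lin y = 0 := congrArg Prod.snd hxy
        have h3 : y ∈ LinearMap.ker (K.d n).lin := by
          rw [LinearMap.mem_ker]; exact neg_eq_zero.1 h2
        rw [← K.exact] at h3
        obtain ⟨y', hy'⟩ := h3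
        have : x + f (n + 2) y' ∈ LinearMap.ker (P.d (n + 1)).lin := by
          rw [LinearMap.mem_ker, map_add, hf, hy']; exact h1
        rw [← P.exact] at this
        obtain ⟨x', hx'⟩ := this
        refine ⟨((x', -y') : (P.P (n + 3)).M × (K.P (n + 2)).M), ?_⟩
        erw [coneD_succ]
        rw [map_neg, map_neg, neg_neg, hy', hx', add_neg_cancel_right]

end Cone

theorem semisimple_quot (hA : 𝒜.Standing) :
    IsSemisimpleModule 𝒜.A (𝒜.A ⧸ 𝒜.jideal) := by
  have := hA.semisimple
  let σ := GradedRing.projZeroRingHom' 𝒜.grading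
  have : RingHomSurjective σ := ⟨GradedRing.projZeroRingHom'_surjective 𝒜.grading⟩
  have hker : ∀ a, a ∈ 𝒜.jideal ↔ σ a = 0 := by
    intro a
    rw [← Subtype.coe_inj]
    rfl
  let l0 : 𝒜.A →ₛₗ[σ] 𝒜.grading 0 :=
    { toFun := σ, map_add' := map_add σ, map_smul' := fun a b => map_mul σ a b }
  let l : (𝒜.A ⧸ 𝒜.jideal) →ₛₗ[σ] 𝒜.grading 0 :=
    Submodule.liftQ 𝒜.jideal l0 (fun a ha => (hker a).1 ha)
  refine (LinearMap.isSemisimpleModule_iff_of_bijective l ⟨?_, ?_⟩).2 hA.semisimple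
  · rw [injective_iff_map_eq_zero]
    intro x hx
    obtain ⟨a, rfl⟩ := Submodule.Quotient.mk_surjective _ x
    rw [Submodule.Quotient.mk_eq_zero]
    exact (hker a).2 hx
  · intro y
    obtain ⟨a, ha⟩ := GradedRing.projZeroRingHom'_surjective 𝒜.grading y
    exact ⟨Submodule.Quotient.mk a, ha⟩

/-- A finitely generated module killed by `J` is a retract of a power of `T`. -/
theorem exists_retract (hA : 𝒜.Standing) (T : Type) [AddCommGroup T] [Module 𝒜.A T]
    (e : T ≃ₗ[𝒜.A] (𝒜.A ⧸ 𝒜.jideal)) (Q : Type) [AddCommGroup Q] [Module 𝒜.A Q]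
    [Module.Finite 𝒜.A Q] (hQ : ∀ a ∈ 𝒜.jideal, ∀ q : Q, a • q = 0) :
    ∃ (k : ℕ) (a : Fin k → Q →ₗ[𝒜.A] T) (b : Fin k → T →ₗ[𝒜.A] Q),
      ∀ q, ∑ i, b i (a i q) = q := by
  have := semisimple_quot hA
  have hT : IsSemisimpleModule 𝒜.A T := IsSemisimpleModule.congr e
  obtain ⟨k, g, hg⟩ := Module.Finite.exists_fin (R := 𝒜.A) (M := Q)
  let b : Fin k → T →ₗ[𝒜.A] Q := fun i =>
    (Submodule.liftQ 𝒜.jideal (LinearMap.toSpanSingleton 𝒜.A Q (g i))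
      (fun a ha => hQ a ha _)) ∘ₗ e.toLinearMap
  have hb : ∀ i, b i (e.symm (Submodule.Quotient.mk 1)) = g i := by
    intro i
    simp only [b, LinearMap.comp_apply, LinearEquiv.coe_coe, LinearEquiv.apply_symm_apply]
    change (1 : 𝒜.A) • g i = g i
    rw [one_smul]
  let π : (Fin k → T) →ₗ[𝒜.A] Q := ∑ i, b i ∘ₗ LinearMap.proj i
  have hπ : Function.Surjective π := by
    rw [← LinearMap.range_eq_top, eq_top_iff, ← hg, Submodule.span_le]
    rintro _ ⟨i, rfl⟩
    refine ⟨Pi.single i (e.symm (Submodule.Quotient.mk 1)), ?_⟩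
    simp only [π, LinearMap.sum_apply, LinearMap.comp_apply, LinearMap.proj_apply]
    rw [Finset.sum_eq_single i]
    · rw [Pi.single_eq_same, hb]
    · intro j _ hj; rw [Pi.single_eq_of_ne hj, map_zero]
    · simp
  obtain ⟨h, hh⟩ := IsSemisimpleModule.lifting_property π hπ LinearMap.id
  refine ⟨k, fun i => LinearMap.proj i ∘ₗ h, b, fun q => ?_⟩
  have := LinearMap.congr_fun hh q
  simpa [π, LinearMap.sum_apply] using this

theorem retract_key (hA : 𝒜.Standing) (T : 𝒜.GMod) (hT : IsTrivialGMod T) (RT : MinRes T)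
    (C : Cpx 𝒜) (s : ℤ) (Q : Type) [AddCommGroup Q] [Module 𝒜.A Q] [Module.Finite 𝒜.A Q]
    (hQ : ∀ a ∈ 𝒜.jideal, ∀ q : Q, a • q = 0) (ε : (C.P 0).M →ₗ[𝒜.A] Q)
    (hε : Function.Surjective ε) (hex : LinearMap.range (C.d 0).lin = LinearMap.ker ε)
    (hs : ∀ j, j ≠ s → ∀ x ∈ (C.P 0).grading j, ε x = 0)
    (n : ℕ) (t : ℤ) (ht : (RT.P (n + 1)).GenInDeg t) (j : ℤ) (hj : j ≠ t + s)
    (x : (C.P (n + 1)).M) (hx : x ∈ (C.P (n + 1)).grading j)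
    (hdx : (C.d n).lin x ∈ (C.P n).rad) :
    ∃ z ∈ (C.P (n + 1)).rad, x - z ∈ LinearMap.range (C.d (n + 1)).lin := by
  obtain ⟨hT0, ⟨e⟩⟩ := hT
  have hTtop : T.grading 0 = ⊤ := by
    rw [eq_top_iff, ← T.sup_eq_top]
    refine iSup_le fun i => ?_
    by_cases hi : i = 0
    · rw [hi]
    · rw [hT0 i hi]; exact bot_le
  obtain ⟨k, a, b, hab⟩ := exists_retract hA T.M e Q hQ
  have hεd : ∀ y, ε ((C.d 0).lin y) = 0 := fun y => by
    have : (C.d 0).lin y ∈ LinearMap.ker ε := hex ▸ ⟨y, rfl⟩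
    exact this
  have haugd : ∀ y, RT.aug.lin ((RT.d 0).lin y) = 0 := fun y => by
    have : (RT.d 0).lin y ∈ LinearMap.ker RT.aug.lin := RT.exact_aug ▸ ⟨y, rfl⟩
    exact this
  have hg : ∀ i, ∃ g : ∀ n, (C.P n).M →ₗ[𝒜.A] (RT.P n).M,
      (∀ x, RT.aug.lin (g 0 x) = a i (ε x)) ∧
      (∀ n j x, x ∈ (C.P n).grading j → g n x ∈ (RT.P n).grading (j + -s)) ∧
      ∀ n x, (RT.d n).lin (g (n + 1) x) = g n ((C.d n).lin x) := by
    intro i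
    obtain ⟨g0, hg0, hg0'⟩ := exists_lift True (-s) (C.P 0) (RT.P 0) T (C.projective 0) RT.aug
      (a i ∘ₗ ε) (fun _ j x hx => by
        by_cases hjs : j = s
        · subst hjs; rw [add_neg_cancel, hTtop]; trivial
        · rw [LinearMap.comp_apply, hs j hjs x hx, map_zero]; exact zero_mem _)
      (fun x => RT.aug_surj _)
    obtain ⟨g, h0, h1, h2⟩ := chain_lift True (-s) C RT.toCpx g0 hg0 (fun x => by
      change g0 _ ∈ LinearMap.range (RT.d 0).lin
      rw [RT.exact_aug, LinearMap.mem_ker, hg0', LinearMap.comp_apply, hεd, map_zero])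
    exact ⟨g, fun x => by rw [h0]; exact hg0' x, h1 trivial, h2⟩
  have hh : ∀ i, ∃ h : ∀ n, (RT.P n).M →ₗ[𝒜.A] (C.P n).M,
      (∀ x, ε (h 0 x) = b i (RT.aug.lin x)) ∧
      ∀ n x, (C.d n).lin (h (n + 1) x) = h n ((RT.d n).lin x) := by
    intro i
    have := RT.projective 0
    obtain ⟨h0, hh0⟩ := Module.projective_lifting_property ε (b i ∘ₗ RT.aug.lin) hε
    have hh0' : ∀ x, ε (h0 x) = b i (RT.aug.lin x) := fun x => LinearMap.congr_fun hh0 x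
    obtain ⟨h, e0, -, h2⟩ := chain_lift False 0 RT.toCpx C h0 (fun h => h.elim) (fun x => by
      rw [hex, LinearMap.mem_ker]
      refine (hh0' _).trans ?_
      exact (congrArg (b i) (haugd x)).trans (map_zero _))
    exact ⟨h, fun x => by rw [e0]; exact hh0' x, h2⟩
  choose g hg0 hgg hgd using hg
  choose h hh0 hhd using hh
  let φ : ∀ n, (C.P n).M →ₗ[𝒜.A] (C.P n).M := fun n => LinearMap.id - ∑ i, h i n ∘ₗ g i n
  have hφ : ∀ n x, φ n x = x - ∑ i, h i n (g i n x) := fun n x => by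
    simp [φ, LinearMap.sum_apply]
  obtain ⟨σ, hσ⟩ := exists_homotopy C φ (fun n x => by
      simp only [hφ, map_sub, map_sum, hhd, hgd]) (fun x => by
      rw [hex, LinearMap.mem_ker, hφ, map_sub, map_sum]
      simp only [hh0, hg0, hab, sub_self]) n
  refine ⟨∑ i, h i (n + 1) (g i (n + 1) x) + σ ((C.d n).lin x), add_mem (sum_mem fun i _ => ?_) ?_,
    ?_⟩
  · exact map_mem_rad _ (ht.mem_rad (by omega) (hgg i (n + 1) j x hx))
  · exact map_mem_rad _ hdx
  · have := hσ x
    rwa [hφ, sub_sub] at this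

theorem rad_prod_mk {N K : 𝒜.GMod} {x : N.M} (hx : x ∈ N.rad) {y : K.M} (hy : y ∈ K.rad) :
    ((x, y) : N.M × K.M) ∈ (N.prod K).rad := by
  have h1 : ((x, 0) : N.M × K.M) ∈ (N.prod K).rad :=
    map_mem_rad (N := N) (K := N.prod K) (LinearMap.inl 𝒜.A N.M K.M) hx
  have h2 : ((0, y) : N.M × K.M) ∈ (N.prod K).rad :=
    map_mem_rad (N := K) (K := N.prod K) (LinearMap.inr 𝒜.A N.M K.M) hy
  have h3 : ((x, y) : N.M × K.M) = (x, 0) + (0, y) := by simp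
  rw [h3]
  exact add_mem h1 h2

theorem MinRes.mem_rad_of_d_eq_zero {N : 𝒜.GMod} (R : MinRes N) {n : ℕ} {y : (R.P (n + 1)).M}
    (h : (R.d n).lin y = 0) : y ∈ (R.P (n + 1)).rad := by
  have : y ∈ LinearMap.ker (R.d n).lin := h
  rw [← R.exact] at this
  exact R.minimal _ this

/-- The terms of the minimal resolution of `J M`. -/
theorem genInDeg_radical (hA : 𝒜.Standing) (p d : ℕ) (T : 𝒜.GMod) (hT : IsTrivialGMod T)
    (hpk : 𝒜.IsPKAlg p d T) (M : 𝒜.GMod) (hfg : Module.Finite 𝒜.A M.M) (s : ℤ)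
    (hMpk : 𝒜.IsPKMod p d s M) (JM : 𝒜.GMod) (hJM : IsJM M JM) (R : MinRes JM) (n : ℕ) :
    (R.P n).GenInDeg ((jump d p (n + 1) : ℤ) + s) := by
  obtain ⟨RT, hRT⟩ := hpk
  obtain ⟨RM, hRM⟩ := hMpk
  obtain ⟨e, he⟩ := hJM
  have hRd : ∀ y, R.aug.lin ((R.d 0).lin y) = 0 := fun y => by
    have : (R.d 0).lin y ∈ LinearMap.ker R.aug.lin := R.exact_aug ▸ ⟨y, rfl⟩
    exact this
  have hRMd : ∀ y, RM.aug.lin ((RM.d 0).lin y) = 0 := fun y => by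
    have : (RM.d 0).lin y ∈ LinearMap.ker RM.aug.lin := RM.exact_aug ▸ ⟨y, rfl⟩
    exact this
  obtain ⟨f0, hf0, hf0'⟩ := exists_lift True 0 (R.P 0) (RM.P 0) M (R.projective 0) RM.aug
    (M.rad.subtype ∘ₗ e.toLinearMap ∘ₗ R.aug.lin)
    (fun _ j x hx => by
      rw [add_zero]; exact (he j _).1 (R.aug.grad j x hx))
    (fun x => RM.aug_surj _)
  replace hf0' : ∀ x, RM.aug.lin (f0 x) = (e (R.aug.lin x) : M.M) := hf0'
  obtain ⟨f, hf00, hfgr, hfd⟩ : ∃ f : ∀ n, (R.P n).M →ₗ[𝒜.A] (RM.P n).M, f 0 = f0 ∧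
      (∀ n j x, x ∈ (R.P n).grading j → f n x ∈ (RM.P n).grading j) ∧
      ∀ n x, (RM.d n).lin (f (n + 1) x) = f n ((R.d n).lin x) := by
    have hr : ∀ x, f0 ((R.d 0).lin x) ∈ LinearMap.range (RM.d 0).lin := fun x => by
      rw [RM.exact_aug, LinearMap.mem_ker, hf0', hRd]; simp
    obtain ⟨f, h0, h1, h2⟩ := chain_lift True 0 R.toCpx RM.toCpx f0 hf0 hr
    exact ⟨f, h0, fun n j x hx => (add_zero j) ▸ h1 trivial n j x hx, h2⟩
  replace hf0' : ∀ x, RM.aug.lin (f 0 x) = (e (R.aug.lin x) : M.M) := fun x => by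
    rw [hf00]; exact hf0' x
  have hinj : ∀ y, f 0 y ∈ LinearMap.range (RM.d 0).lin → y ∈ LinearMap.range (R.d 0).lin := by
    intro y hy
    rw [RM.exact_aug, LinearMap.mem_ker, hf0'] at hy
    rw [R.exact_aug, LinearMap.mem_ker]
    exact e.map_eq_zero_iff.1 (Subtype.ext hy)
  let C : Cpx 𝒜 := cone RM.toCpx R.toCpx f hfgr hfd hinj
  have hmin0 : ∀ y, f 0 y ∈ (RM.P 0).rad := by
    intro y
    have h1 : RM.aug.lin (f 0 y) ∈ M.rad := by rw [hf0']; exact (e _).2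
    have h2 : M.rad = Submodule.map RM.aug.lin (RM.P 0).rad := by
      rw [GMod.rad, GMod.rad, Submodule.map_smul'', Submodule.map_top,
        LinearMap.range_eq_top.2 RM.aug_surj]
    rw [h2] at h1
    obtain ⟨z, hz, hz'⟩ := h1
    have h3 : f 0 y - z ∈ LinearMap.ker RM.aug.lin := by
      rw [LinearMap.mem_ker, map_sub, hz', sub_self]
    rw [← RM.exact_aug] at h3
    have := add_mem (RM.minimal 0 h3) hz
    rwa [sub_add_cancel] at this
  let ε : (RM.P 0).M →ₗ[𝒜.A] (M.M ⧸ M.rad) := M.rad.mkQ ∘ₗ RM.aug.lin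
  have hQ : ∀ a ∈ 𝒜.jideal, ∀ q : M.M ⧸ M.rad, a • q = 0 := by
    intro a ha q
    obtain ⟨m, rfl⟩ := Submodule.Quotient.mk_surjective _ q
    rw [← Submodule.Quotient.mk_smul, Submodule.Quotient.mk_eq_zero]
    exact Submodule.smul_mem_smul ha trivial
  have hεs : Function.Surjective ε := (Submodule.mkQ_surjective _).comp RM.aug_surj
  have hεk : ∀ z, ε z = 0 ↔ RM.aug.lin z ∈ M.rad := fun z => by
    simp only [ε, LinearMap.comp_apply, Submodule.mkQ_apply, Submodule.Quotient.mk_eq_zero]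
  have hex : LinearMap.range (C.d 0).lin = LinearMap.ker ε := by
    apply le_antisymm
    · rintro _ ⟨⟨x, y⟩, rfl⟩
      have h0 : ∀ (x : (RM.P 1).M) (y : (R.P 0).M), ε ((RM.d 0).lin x + f 0 y) = 0 := by
        intro x y
        rw [hεk, map_add, hRMd, hf0', zero_add]
        exact (e _).2
      exact h0 x y
    · intro (z : (RM.P 0).M) hz
      have h1 : RM.aug.lin z ∈ M.rad := (hεk z).1 hz
      obtain ⟨y, hy⟩ := R.aug_surj (e.symm ⟨_, h1⟩)
      have h3 : z - f 0 y ∈ LinearMap.ker RM.aug.lin := by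
        rw [LinearMap.mem_ker, map_sub, hf0', hy, e.apply_symm_apply, sub_self]
      rw [← RM.exact_aug] at h3
      obtain ⟨x, hx⟩ := h3
      refine ⟨((x, y) : (RM.P 1).M × (R.P 0).M), ?_⟩
      change (RM.d 0).lin x + f 0 y = z
      rw [hx, sub_add_cancel]
  have hs0 : ∀ j, j ≠ s → ∀ x ∈ (C.P 0).grading j, ε x = 0 := by
    intro j hj x hx
    have h0 : (RM.P 0).GenInDeg s := by
      have := hRM 0
      simpa [jump] using this
    exact (hεk x).2 (map_mem_rad RM.aug.lin (h0.mem_rad hj hx))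
  -- the key step
  have main : ∀ n j (y : (R.P n).M), j ≠ (jump d p (n + 1) : ℤ) + s → y ∈ (R.P n).grading j →
      (C.d n).lin (((0, y) : (RM.P (n + 1)).M × (R.P n).M)) ∈ (C.P n).rad →
      y ∈ (R.P n).rad := by
    intro n j y hj hy hd
    obtain ⟨z, hz, hzx⟩ : ∃ z : (RM.P (n + 1)).M × (R.P n).M, z ∈ (C.P (n + 1)).rad ∧
        ((0, y) : (RM.P (n + 1)).M × (R.P n).M) - z ∈ LinearMap.range (C.d (n + 1)).lin :=
      retract_key hA T hT RT C s (M.M ⧸ M.rad) hQ ε hεs hex hs0 n _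
      (hRT (n + 1)) j (by rw [add_zero]; exact hj) ((0, y) : (RM.P (n + 1)).M × (R.P n).M)
      ⟨zero_mem _, hy⟩ hd
    obtain ⟨x', hx'⟩ := hzx
    have hz2 : (z : (RM.P (n + 1)).M × (R.P n).M).2 ∈ (R.P n).rad :=
      map_mem_rad (N := (RM.P (n + 1)).prod (R.P n)) (K := R.P n)
        (LinearMap.snd 𝒜.A (RM.P (n + 1)).M (R.P n).M) hz
    obtain ⟨u, v⟩ : (RM.P (n + 2)).M × (R.P (n + 1)).M := x'
    have h1 : ((RM.d (n + 1)).lin u + f (n + 1) v, -(R.d n).lin v) =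
        ((0, y) : (RM.P (n + 1)).M × (R.P n).M) - z :=
      (coneD_succ RM.toCpx R.toCpx f hfgr n u v).symm.trans hx'
    have h2 : -(R.d n).lin v = y - (z : (RM.P (n + 1)).M × (R.P n).M).2 := congrArg Prod.snd h1
    have h3 := add_mem (neg_mem (R.minimal n ⟨v, rfl⟩ : (R.d n).lin v ∈ (R.P n).rad)) hz2
    rwa [h2, sub_add_cancel] at h3
  induction n with
  | zero =>
    refine (R.P 0).genInDeg_of_mem_rad (R.fg 0) _ (fun j hj y hy => main 0 j y hj hy ?_)
    change (RM.d 0).lin 0 + f 0 y ∈ (RM.P 0).rad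
    rw [map_zero, zero_add]
    exact hmin0 y
  | succ n ih =>
    refine (R.P (n + 1)).genInDeg_of_mem_rad (R.fg _) _ (fun j hj y hy => ?_)
    by_cases hjt : j ≤ (jump d p (n + 1) : ℤ) + s
    · exact R.mem_rad_of_d_eq_zero
        (ih.eq_zero_of_mem_rad hjt ((R.d n).grad j y hy) (R.minimal n ⟨y, rfl⟩))
    · refine main (n + 1) j y hj hy ?_
      have h1 : (RM.d (n + 1)).lin 0 + f (n + 1) y ∈ (RM.P (n + 1)).rad := by
        rw [map_zero, zero_add]
        exact (hRM (n + 1)).mem_rad (by omega) (hfgr _ _ _ hy)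
      have h2 : -(R.d n).lin y ∈ (R.P n).rad := neg_mem (R.minimal n ⟨y, rfl⟩)
      have h3 := rad_prod_mk h1 h2
      have h4 := coneD_succ RM.toCpx R.toCpx f hfgr n 0 y
      exact (congrArg (· ∈ (C.P (n + 1)).rad) h4).mpr h3

theorem jump_mul_add (d p n k : ℕ) (hp : 2 ≤ p) : jump d p (p * n + k) = n * d + jump d p k := by
  unfold jump
  rw [Nat.mul_add_mod]
  have h1 : ∀ m, (m - m % p) / p = m / p := fun m => by
    have h := Nat.div_add_mod m p
    have : m - m % p = p * (m / p) := by omega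
    rw [this, Nat.mul_div_cancel_left _ (by omega)]
  have h2 : p * n + k - k % p = (p * n + k) - (p * n + k) % p := by rw [Nat.mul_add_mod]
  rw [h2, h1, h1, Nat.mul_add_div (by omega), add_mul, add_assoc]

/-- The truncated resolution is a minimal resolution of the syzygy. -/
def shiftRes {N : 𝒜.GMod} (R : MinRes N) (q : ℕ) (W : 𝒜.GMod)
    (e : W.M ≃ₗ[𝒜.A] ↥(LinearMap.range (R.d q).lin))
    (he : ∀ (j : ℤ) (x : W.M), x ∈ W.grading j ↔ ((e x : (R.P q).M) ∈ (R.P q).grading j)) :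
    MinRes W where
  P k := R.P (q + 1 + k)
  d k := R.d (q + 1 + k)
  aug :=
    { lin := e.symm.toLinearMap ∘ₗ (R.d q).lin.rangeRestrict
      grad := fun j x hx => by
        rw [he, LinearMap.comp_apply, LinearEquiv.coe_coe, e.apply_symm_apply]
        exact (R.d q).grad j x hx }
  fg k := R.fg _
  projective k := R.projective _
  aug_surj := e.symm.surjective.comp (LinearMap.surjective_rangeRestrict _)
  exact_aug := by
    change LinearMap.range (R.d (q + 1)).lin = _
    rw [R.exact]
    ext x
    simp only [LinearMap.mem_ker, LinearMap.comp_apply, LinearEquiv.coe_coe,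
      LinearEquiv.map_eq_zero_iff]
    exact (Subtype.ext_iff (a1 := (R.d q).lin.rangeRestrict x) (a2 := 0)).symm
  exact k := R.exact (q + 1 + k)
  minimal k := R.minimal _

end Aux

end GradedAlg

open GradedAlg in
/-- Let `A` be piecewise-Koszul with graded Jacobson radical `J` and `M` a
piecewise-Koszul module generated in degree `s`.  Then for every `n ≥ 1` the
`(pn−1)`-st syzygy `Ω^{pn−1}(JM)` in a minimal graded projective resolution of `JM`
is a piecewise-Koszul module. -/
theorem syzygy_pn_sub_one_of_radical_isPKMod
    {F : Type} [Field F] (𝒜 : GradedAlg F) (hA : 𝒜.Standing)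
    (p d : ℕ) (hp : 2 ≤ p) (hpd : p ≤ d)
    (T : 𝒜.GMod) (hT : IsTrivialGMod T) (hpk : 𝒜.IsPKAlg p d T)
    (M : 𝒜.GMod) (hfg : Module.Finite 𝒜.A M.M) (s : ℤ)
    (hMs : M.GenInDeg s) (hMpk : 𝒜.IsPKMod p d s M)
    (JM : 𝒜.GMod) (hJM : IsJM M JM)
    (R : MinRes JM) (n : ℕ) (hn : 1 ≤ n)
    (W : 𝒜.GMod) (hW : IsSyzygy R (p * n - 1) W) :
    ∃ s' : ℤ, 𝒜.IsPKMod p d s' W := by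
  have h2 : 2 ≤ p * n := le_trans hp (Nat.le_mul_of_pos_right p hn)
  obtain ⟨q, hq⟩ : ∃ q, p * n - 1 = q + 1 := ⟨p * n - 2, by omega⟩
  rw [hq] at hW
  obtain ⟨e, he⟩ : ∃ e : W.M ≃ₗ[𝒜.A] ↥(LinearMap.range (R.d q).lin),
      ∀ (j : ℤ) (x : W.M), x ∈ W.grading j ↔ ((e x : (R.P q).M) ∈ (R.P q).grading j) := by
    cases q with
    | zero =>
      obtain ⟨e, he⟩ := hW
      exact ⟨e.trans (LinearEquiv.ofEq _ _ R.exact_aug.symm), he⟩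
    | succ q =>
      obtain ⟨e, he⟩ := hW
      exact ⟨e.trans (LinearEquiv.ofEq _ _ (R.exact q).symm), he⟩
  refine ⟨((n * d : ℕ) : ℤ) + s, shiftRes R q W e he, fun k => ?_⟩
  have := genInDeg_radical hA p d T hT hpk M hfg s hMpk JM hJM R (q + 1 + k)
  have h3 : q + 1 + k + 1 = p * n + k := by omega
  rw [h3, jump_mul_add d p n k hp] at this
  change (R.P (q + 1 + k)).GenInDeg _
  convert this using 1
  push_cast
  ring
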